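/- $\sum_{n=1}^{\infty} \frac{(4n-1)(-64)^n}{n^3 \binom{2n}{n}^3}\left(H_{2n-1}^{(2)} - \frac{1}{2} H_{n-1}^{(2)}\right) = -16\,\beta(4)$. -/

import Mathlib

open Filter Topology

/-- Generalized harmonic number `H_n^{(s)} = ∑_{k=1}^n 1/k^s`. -/
noncomputable def H (s n : ℕ) : ℝ := ∑ k ∈ Finset.range n, 1 / ((k:ℝ) + 1) ^ s

/-- The Dirichlet beta function `β(s) = ∑_{k ≥ 0} (-1)^k/(2k+1)^s`. -/
noncomputable def dirichletBeta (s : ℕ) : ℝ := ∑' k : ℕ, (-1:ℝ)^k / (2*(k:ℝ)+1)^s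

/-- auxiliary product -/
noncomputable def vv (m k : ℕ) : ℝ :=
  1 / ((k:ℝ) + 1/2) * ∏ j ∈ Finset.range m, ((j:ℝ) + 1) / ((k:ℝ) + 1/2 + j + 1)

/-- auxiliary harmonic difference -/
noncomputable def LL (m k : ℕ) : ℝ :=
  ∑ j ∈ Finset.range (m+1), 1 / ((k:ℝ) + 1/2 + j)^2 - ∑ j ∈ Finset.range m, 1 / ((j:ℝ) + 1)^2

noncomputable def FF (m k : ℕ) : ℝ :=
  (-1:ℝ)^(m+k) * (2*m + k + 3/2) * (vv m k)^3 * LL m k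

noncomputable def GG (m k : ℕ) : ℝ :=
  (-1:ℝ)^(m+k) * (2*k + 1 + m) * (vv m k)^3 * LL m k

lemma vv_succ (m k : ℕ) : vv (m+1) k = vv m k * (((m:ℝ)+1) / ((k:ℝ) + m + 3/2)) := by
  unfold vv
  rw [Finset.prod_range_succ, ← mul_assoc]
  congr 2
  ring

lemma vv_succ_right (m k : ℕ) :
    vv m (k+1) = vv m k * (((k:ℝ)+1/2) / ((k:ℝ) + m + 3/2)) := by
  induction m with
  | zero =>
    simp only [vv, Finset.range_zero, Finset.prod_empty]
    push_cast
    have h1 : (k:ℝ) + 1/2 ≠ 0 := by positivity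
    have h2 : (k:ℝ) + 1 + 1/2 ≠ 0 := by positivity
    have h3 : (k:ℝ) + 0 + 3/2 ≠ 0 := by positivity
    field_simp
    ring
  | succ m ih =>
    rw [vv_succ, vv_succ, ih]
    push_cast
    have h1 : (k:ℝ) + m + 3/2 ≠ 0 := by positivity
    have h2 : (k:ℝ) + 1 + m + 3/2 ≠ 0 := by positivity
    have h3 : (k:ℝ) + (m + 1) + 3/2 ≠ 0 := by positivity
    have e : (k:ℝ) + 1 + m + 3/2 = (k:ℝ) + (m + 1) + 3/2 := by ring
    rw [e]
    ring

lemma LL_succ (m k : ℕ) :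
    LL (m+1) k = LL m k + 1 / ((k:ℝ) + m + 3/2)^2 - 1 / ((m:ℝ)+1)^2 := by
  unfold LL
  rw [Finset.sum_range_succ _ (m+1), Finset.sum_range_succ (fun j : ℕ => 1 / ((j:ℝ) + 1)^2) m]
  have e : (k:ℝ) + 1/2 + ((m+1 : ℕ):ℝ) = (k:ℝ) + m + 3/2 := by push_cast; ring
  rw [e]; ring

lemma LL_succ_right (m k : ℕ) :
    LL m (k+1) = LL m k + 1 / ((k:ℝ) + m + 3/2)^2 - 1 / ((k:ℝ)+1/2)^2 := by
  unfold LL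
  rw [Finset.sum_range_succ, Finset.sum_range_succ' (fun j : ℕ => 1 / ((k:ℝ) + 1/2 + j)^2)]
  have e : ((k+1:ℕ):ℝ) + 1/2 + (m:ℝ) = (k:ℝ) + m + 3/2 := by push_cast; ring
  have e2 : ∀ j : ℕ, ((k+1:ℕ):ℝ) + 1/2 + (j:ℝ) = (k:ℝ) + 1/2 + ((j+1:ℕ):ℝ) := by
    intro j; push_cast; ring
  rw [e]
  simp only [e2]
  simp only [Nat.cast_zero, add_zero]
  ring

lemma wz (m k : ℕ) : FF m k - FF m (k+1) = GG m k - GG (m+1) k := by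
  unfold FF GG
  rw [vv_succ, vv_succ_right, LL_succ, LL_succ_right]
  have s1 : (-1:ℝ)^(m+(k+1)) = -(-1:ℝ)^(m+k) := by rw [← add_assoc, pow_succ]; ring
  have s2 : (-1:ℝ)^(m+1+k) = -(-1:ℝ)^(m+k) := by rw [add_right_comm, pow_succ]; ring
  rw [s1, s2]
  generalize (-1:ℝ)^(m+k) = s
  generalize vv m k = v
  generalize LL m k = L
  push_cast
  have hx : (k:ℝ) + 1/2 ≠ 0 := by positivity
  have hy : (m:ℝ) + 1 ≠ 0 := by positivity
  have hz : (k:ℝ) + m + 3/2 ≠ 0 := by positivity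
  obtain ⟨x, hxx⟩ : ∃ x : ℝ, x = (k:ℝ) + 1/2 := ⟨_, rfl⟩
  obtain ⟨y, hyy⟩ : ∃ y : ℝ, y = (m:ℝ) + 1 := ⟨_, rfl⟩
  have ek : (k:ℝ) = x - 1/2 := by linarith
  have em : (m:ℝ) = y - 1 := by linarith
  have ez : (k:ℝ) + m + 3/2 = x + y := by linarith
  rw [ez] at hz ⊢
  rw [← hxx] at hx ⊢
  rw [← hyy] at hy ⊢
  rw [ek, em]
  field_simp
  ring

lemma wz_sum (N K : ℕ) :
    ∑ m ∈ Finset.range N, FF m 0 - ∑ m ∈ Finset.range N, FF m K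
      = ∑ k ∈ Finset.range K, GG 0 k - ∑ k ∈ Finset.range K, GG N k := by
  induction K with
  | zero => simp
  | succ K ih =>
    rw [Finset.sum_range_succ, Finset.sum_range_succ]
    have h : ∑ m ∈ Finset.range N, FF m K - ∑ m ∈ Finset.range N, FF m (K+1)
        = GG 0 K - GG N K := by
      rw [← Finset.sum_sub_distrib, ← Finset.sum_range_sub' (fun m => GG m K)]
      exact Finset.sum_congr rfl fun m _ => wz m K
    linarith

lemma summable_B : Summable (fun j : ℕ => 1 / ((j:ℝ) + 1/2)^2) := by
  have h := Real.summable_one_div_nat_add_rpow (1/2) 2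
  have h2 := h.2 (by norm_num)
  refine h2.congr fun j => ?_
  rw [abs_of_pos (by positivity)]
  norm_cast

noncomputable def BB : ℝ := ∑' j : ℕ, 1 / ((j:ℝ) + 1/2)^2

lemma sum_le_BB (n : ℕ) : ∑ j ∈ Finset.range n, 1 / ((j:ℝ) + 1/2)^2 ≤ BB :=
  summable_B.sum_le_tsum _ (fun j _ => by positivity)

lemma BB_nonneg : 0 ≤ BB := by simpa using sum_le_BB 0

lemma LL_abs (m k : ℕ) : |LL m k| ≤ BB := by
  have h1 : ∑ j ∈ Finset.range (m+1), 1 / ((k:ℝ) + 1/2 + j)^2 ≤ BB := by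
    refine le_trans (Finset.sum_le_sum fun j _ => ?_) (sum_le_BB (m+1))
    apply one_div_le_one_div_of_le (by positivity)
    have : (0:ℝ) ≤ k := by positivity
    apply pow_le_pow_left₀ (by positivity); linarith
  have h2 : ∑ j ∈ Finset.range m, 1 / ((j:ℝ) + 1)^2 ≤ BB := by
    refine le_trans (Finset.sum_le_sum fun j _ => ?_) (sum_le_BB m)
    apply one_div_le_one_div_of_le (by positivity)
    apply pow_le_pow_left₀ (by positivity); linarith
  have h3 : 0 ≤ ∑ j ∈ Finset.range (m+1), 1 / ((k:ℝ) + 1/2 + j)^2 :=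
    Finset.sum_nonneg fun j _ => by positivity
  have h4 : 0 ≤ ∑ j ∈ Finset.range m, 1 / ((j:ℝ) + 1)^2 :=
    Finset.sum_nonneg fun j _ => by positivity
  unfold LL
  rw [abs_le]
  constructor <;> linarith

noncomputable def pp (m : ℕ) : ℝ := ∏ j ∈ Finset.range m, ((j:ℝ) + 1) / ((j:ℝ) + 3/2)

lemma pp_nonneg (m : ℕ) : 0 ≤ pp m := Finset.prod_nonneg fun j _ => by positivity

lemma pp_sq (m : ℕ) : (m + 1) * pp m ^ 2 ≤ 1 := by
  induction m with
  | zero => simp [pp]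
  | succ m ih =>
    have e : pp (m+1) = pp m * (((m:ℝ) + 1) / ((m:ℝ) + 3/2)) := by
      unfold pp; rw [Finset.prod_range_succ]
    rw [e]
    push_cast
    refine le_trans ?_ ih
    have hh : ((m:ℝ)+1+1) * (((m:ℝ) + 1) / ((m:ℝ) + 3/2))^2 ≤ (m:ℝ)+1 := by
      rw [div_pow, ← mul_div_assoc, div_le_iff₀ (by positivity)]
      have : (0:ℝ) ≤ m := by positivity
      nlinarith
    calc ((m:ℝ)+1+1) * (pp m * (((m:ℝ) + 1) / ((m:ℝ) + 3/2)))^2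
        = (((m:ℝ)+1+1) * (((m:ℝ) + 1) / ((m:ℝ) + 3/2))^2) * pp m ^ 2 := by ring
      _ ≤ _ := mul_le_mul_of_nonneg_right hh (by positivity)

lemma pp_tendsto : Tendsto pp atTop (𝓝 0) := by
  have h : Tendsto (fun m => pp m ^ 2) atTop (𝓝 0) := by
    refine squeeze_zero (fun m => by positivity) (fun m => ?_)
      (tendsto_one_div_add_atTop_nhds_zero_nat (𝕜 := ℝ))
    rw [le_div_iff₀ (by positivity)]
    linarith [pp_sq m]
  have h2 := h.sqrt
  simp only [Real.sqrt_zero] at h2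
  exact h2.congr fun m => Real.sqrt_sq (pp_nonneg m)

lemma vv_nonneg (m k : ℕ) : 0 ≤ vv m k := by
  unfold vv
  exact mul_nonneg (by positivity) (Finset.prod_nonneg fun j _ => by positivity)

lemma vv_le (m k : ℕ) : vv m k ≤ 1 / ((k:ℝ)+1/2) * pp m := by
  unfold vv pp
  refine mul_le_mul_of_nonneg_left ?_ (by positivity)
  refine Finset.prod_le_prod (fun j _ => by positivity) fun j _ => ?_
  apply div_le_div_of_nonneg_left (by positivity) (by positivity)
  have : (0:ℝ) ≤ k := by positivity
  linarith

lemma pp_le_one (m : ℕ) : pp m ≤ 1 := by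
  have h := pp_sq m
  have : (0:ℝ) ≤ m := by positivity
  nlinarith [pp_nonneg m, sq_nonneg (pp m)]

lemma abs_form (s c v L : ℝ) (n : ℕ) (hs : s = (-1)^n) (hc : 0 ≤ c) (hv : 0 ≤ v) :
    |s * c * v^3 * L| = c * v^3 * |L| := by
  rw [abs_mul, abs_mul, abs_mul, hs, abs_pow, abs_neg, abs_one, one_pow, one_mul,
    abs_of_nonneg hc, abs_of_nonneg (pow_nonneg hv 3)]

lemma FF_abs (m k : ℕ) : |FF m k| ≤ ((4*m+3) * BB) * (1 / ((k:ℝ)+1/2)^2) := by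
  unfold FF
  rw [abs_form _ _ _ _ (m+k) rfl (by positivity) (vv_nonneg m k)]
  have hv : vv m k ≤ 1 / ((k:ℝ)+1/2) := by
    refine (vv_le m k).trans (mul_le_of_le_one_right (by positivity) (pp_le_one m))
  have h3 : (vv m k)^3 ≤ (1 / ((k:ℝ)+1/2))^3 := pow_le_pow_left₀ (vv_nonneg m k) hv 3
  have hf : (2*(m:ℝ) + k + 3/2) ≤ (4*m+3) * ((k:ℝ)+1/2) := by
    have h1 : (0:ℝ) ≤ k := by positivity
    have h2 : (0:ℝ) ≤ m := by positivity
    nlinarith [mul_nonneg h1 h2]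
  calc (2*(m:ℝ) + k + 3/2) * (vv m k)^3 * |LL m k|
      ≤ ((4*m+3) * ((k:ℝ)+1/2)) * (1 / ((k:ℝ)+1/2))^3 * BB := by
        have := vv_nonneg m k
        have := LL_abs m k
        gcongr
    _ = _ := by
        have : (k:ℝ)+1/2 ≠ 0 := by positivity
        field_simp

lemma GG_abs (m k : ℕ) : |GG m k| ≤ (2 * BB * pp m) * (1 / ((k:ℝ)+1/2)^2) := by
  unfold GG
  rw [abs_form _ _ _ _ (m+k) rfl (by positivity) (vv_nonneg m k)]
  have h3 : (vv m k)^3 ≤ (1 / ((k:ℝ)+1/2) * pp m)^3 :=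
    pow_le_pow_left₀ (vv_nonneg m k) (vv_le m k) 3
  have hf : (2*(k:ℝ) + 1 + m) ≤ (m+1) * (2*((k:ℝ)+1/2)) := by
    have h1 : (0:ℝ) ≤ k := by positivity
    have h2 : (0:ℝ) ≤ m := by positivity
    nlinarith [mul_nonneg h1 h2]
  have hB := BB_nonneg
  have hp := pp_nonneg m
  calc (2*(k:ℝ) + 1 + m) * (vv m k)^3 * |LL m k|
      ≤ ((m+1) * (2*((k:ℝ)+1/2))) * (1 / ((k:ℝ)+1/2) * pp m)^3 * BB := by
        have := vv_nonneg m k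
        have := LL_abs m k
        gcongr
    _ = ((m+1) * pp m ^ 2) * ((2 * BB * pp m) * (1 / ((k:ℝ)+1/2)^2)) := by
        have : (k:ℝ)+1/2 ≠ 0 := by positivity
        field_simp
    _ ≤ 1 * ((2 * BB * pp m) * (1 / ((k:ℝ)+1/2)^2)) :=
        mul_le_mul_of_nonneg_right (pp_sq m) (by positivity)
    _ = _ := one_mul _

lemma GG_zero (k : ℕ) : GG 0 k = 32 * ((-1:ℝ)^k / (2*(k:ℝ)+1)^4) := by
  unfold GG vv LL
  simp only [Finset.range_zero, Finset.prod_empty, Finset.sum_empty, zero_add,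
    Finset.sum_range_one, Nat.cast_zero, add_zero, mul_one, sub_zero]
  have h1 : (k:ℝ) + 1/2 ≠ 0 := by positivity
  have h2 : 2*(k:ℝ) + 1 ≠ 0 := by positivity
  have e : (k:ℝ) + 1/2 = (2*k+1)/2 := by ring
  rw [e]
  field_simp
  norm_num

lemma GG_summable : Summable (GG 0) := by
  refine Summable.of_norm_bounded (summable_B.mul_left (2 * BB * pp 0)) fun k => ?_
  exact GG_abs 0 k

lemma GG_tsum : ∑' k, GG 0 k = 32 * dirichletBeta 4 := by
  unfold dirichletBeta
  rw [← tsum_mul_left]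
  exact tsum_congr GG_zero

lemma FF_tendsto (m : ℕ) : Tendsto (fun k => FF m k) atTop (𝓝 0) := by
  refine squeeze_zero_norm (fun k => FF_abs m k) ?_
  have h := summable_B.tendsto_atTop_zero.const_mul ((4*(m:ℝ)+3) * BB)
  simpa using h

lemma main_bound (N : ℕ) :
    |32 * dirichletBeta 4 - ∑ m ∈ Finset.range N, FF m 0| ≤ 2 * BB * pp N * BB := by
  have h1 : Tendsto (fun K => ∑ k ∈ Finset.range K, GG 0 k) atTop (𝓝 (32 * dirichletBeta 4)) := by
    rw [← GG_tsum]; exact GG_summable.hasSum.tendsto_sum_nat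
  have h2 : Tendsto (fun K => ∑ m ∈ Finset.range N, FF m K) atTop (𝓝 0) := by
    have := tendsto_finsetSum (Finset.range N) (fun m _ => FF_tendsto m)
    simpa using this
  have h3 : Tendsto (fun K => ∑ k ∈ Finset.range K, GG N k) atTop
      (𝓝 (32 * dirichletBeta 4 - ∑ m ∈ Finset.range N, FF m 0)) := by
    have h4 := (h1.sub_const (∑ m ∈ Finset.range N, FF m 0)).add h2
    rw [add_zero] at h4
    refine h4.congr fun K => ?_
    linarith [wz_sum N K]
  refine le_of_tendsto h3.abs (Eventually.of_forall fun K => ?_)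
  have hB := BB_nonneg
  have hp := pp_nonneg N
  calc |∑ k ∈ Finset.range K, GG N k| ≤ ∑ k ∈ Finset.range K, |GG N k| :=
        Finset.abs_sum_le_sum_abs _ _
    _ ≤ ∑ k ∈ Finset.range K, (2 * BB * pp N) * (1 / ((k:ℝ)+1/2)^2) :=
        Finset.sum_le_sum fun k _ => GG_abs N k
    _ = (2 * BB * pp N) * ∑ k ∈ Finset.range K, (1 / ((k:ℝ)+1/2)^2) := by
        rw [Finset.mul_sum]
    _ ≤ _ := mul_le_mul_of_nonneg_left (sum_le_BB K) (by positivity)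

lemma vv_choose (m : ℕ) :
    vv m 0 = (4:ℝ)^(m+1) / (2 * (((m:ℝ)+1) * ((2*(m+1)).choose (m+1) : ℝ))) * 2 := by
  change vv m 0 = (4:ℝ)^(m+1) / (2 * (((m:ℝ)+1) * (Nat.centralBinom (m+1) : ℝ))) * 2
  induction m with
  | zero => simp [vv, Nat.centralBinom]; norm_num [Nat.choose]
  | succ m ih =>
    rw [vv_succ, ih]
    have h := Nat.succ_mul_centralBinom_succ (m+1)
    have h' : ((m:ℝ)+1+1) * (Nat.centralBinom (m+1+1) : ℝ)
        = 2 * (2*((m:ℝ)+1)+1) * (Nat.centralBinom (m+1) : ℝ) := by exact_mod_cast h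
    push_cast
    rw [h']
    have hc : (Nat.centralBinom (m+1) : ℝ) ≠ 0 := by
      exact_mod_cast Nat.centralBinom_ne_zero (m+1)
    have h1 : (0:ℝ) + m + 3/2 ≠ 0 := by positivity
    have h2 : 2*((m:ℝ)+1)+1 ≠ 0 := by positivity
    have h3 : (m:ℝ)+1 ≠ 0 := by positivity
    have e : (0:ℝ) + m + 3/2 = (2*((m:ℝ)+1)+1)/2 := by ring
    rw [e]
    field_simp
    ring

lemma LL_H (m : ℕ) : LL m 0 = 4 * (H 2 (2*m+1) - 1/2 * H 2 m) := by
  induction m with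
  | zero => simp [LL, H]; norm_num
  | succ m ih =>
    rw [LL_succ, ih]
    have e : 2*(m+1)+1 = 2*m+1+1+1 := by ring
    unfold H
    rw [e, Finset.sum_range_succ _ (2*m+1+1), Finset.sum_range_succ _ (2*m+1),
      Finset.sum_range_succ _ m]
    push_cast
    have h1 : (0:ℝ) + m + 3/2 = (2*m+1+1+1)/2 := by ring
    have h2 : 2*(m:ℝ)+1+1 = 2*(m+1) := by ring
    have h3 : (m:ℝ)+1 ≠ 0 := by positivity
    have h4 : 2*(m:ℝ)+1+1+1 ≠ 0 := by positivity
    rw [h1]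
    rw [h2] at h4 ⊢
    field_simp
    ring

lemma term_eq (n : ℕ) :
    ((4 * ((n:ℝ)+1) - 1) * (-64:ℝ)^(n+1)) /
          (((n:ℝ)+1)^3 * ((2*(n+1)).choose (n+1) : ℝ)^3) *
        (H 2 (2*n+1) - 1/2 * H 2 n) = -(1/2) * FF n 0 := by
  unfold FF
  rw [LL_H, vv_choose]
  have hc : ((2*(n+1)).choose (n+1) : ℝ) ≠ 0 := by
    exact_mod_cast Nat.centralBinom_ne_zero (n+1)
  have h3 : (n:ℝ)+1 ≠ 0 := by positivity
  have e : (-64:ℝ)^(n+1) = -((-1)^n * ((4:ℝ)^(n+1))^3) := by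
    rw [← pow_mul, mul_comm (n+1) 3, pow_mul, show (-64:ℝ) = (-1) * 4^3 by norm_num, mul_pow,
      pow_succ (-1:ℝ)]
    ring
  rw [e]
  generalize (H 2 (2*n+1) - 1/2 * H 2 n) = L
  generalize (4:ℝ)^(n+1) = q
  push_cast
  simp only [add_zero]
  field_simp
  ring

theorem stmt_8 :
    Tendsto (fun N => ∑ n ∈ Finset.range N,
      ((4 * ((n:ℝ)+1) - 1) * (-64:ℝ)^(n+1)) /
          (((n:ℝ)+1)^3 * ((2*(n+1)).choose (n+1) : ℝ)^3) *
        (H 2 (2*n+1) - 1/2 * H 2 n))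
      atTop (𝓝 (-16 * dirichletBeta 4)) := by
  simp only [term_eq]
  have h0 : Tendsto (fun N => 32 * dirichletBeta 4 - ∑ m ∈ Finset.range N, FF m 0)
      atTop (𝓝 0) := by
    refine squeeze_zero_norm (fun N => main_bound N) ?_
    have := (pp_tendsto.const_mul (2*BB)).mul_const BB
    simpa using this
  have h1 := (h0.const_mul (1/2)).sub_const (16 * dirichletBeta 4)
  have e : (1/2 * 0 - 16 * dirichletBeta 4 : ℝ) = -16 * dirichletBeta 4 := by ring
  rw [e] at h1
  refine h1.congr fun N => ?_
  rw [← Finset.mul_sum]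
  ring
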